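/- Let K be an algebraically closed field of characteristic 0 and (g,A) a compatible pair over K such that g is strongly graded, i.e. there exists h₀ ∈ g such that the operator ad h₀ : g → g is diagonalizable with eigenspace decomposition g = ⊕_{c∈K} g_c, and the nullspace g₀ is spanned by the subspaces [g_c, g_{−c}] for c ∈ K \ {0}. Then (g,A) is perfect, i.e. [g, g^k]·g + (g^k ∩ g^{k+1}) = g^{k+1} for all k ≥ 2. -/

import Mathlib

open Submodule TensorProduct

variable (K : Type*) [Field K]

/-- The span of all products `a * b`, `a ∈ S`, `b ∈ T` (the subspace `S·T`). -/
def pSpan {R : Type*} [NonUnitalRing R] [Module K R] (S T : Submodule K R) : Submodule K R :=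
  Submodule.span K {x | ∃ a ∈ S, ∃ b ∈ T, x = a * b}

/-- The span of all commutators `a * b - b * a`, `a ∈ S`, `b ∈ T` (the subspace `[S, T]`). -/
def bSpan {R : Type*} [NonUnitalRing R] [Module K R] (S T : Submodule K R) : Submodule K R :=
  Submodule.span K {x | ∃ a ∈ S, ∃ b ∈ T, x = a * b - b * a}

/-- The `k`-th commutator space `S^(k)`: `S^(0) = S`, `S^(k) = [S, S^(k-1)]`.
For `S = ⊤` this is the commutator space `F^(k)` of the algebra. -/
def cSp {R : Type*} [NonUnitalRing R] [Module K R] (S : Submodule K R) : ℕ → Submodule K R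
  | 0 => S
  | (k+1) => bSpan K S (cSp S k)

/-- `IklS K S ℓ k` is `I_k^ℓ(R, S)`: the sum of `S^(λ₁) ⋯ S^(λ_ℓ)` over
`λ₁ + ⋯ + λ_ℓ = k`, defined via the recursion `I_k^1 = S^(k)`,
`I_k^ℓ = Σ_{0 ≤ i ≤ k} S^(i) · I_{k-i}^{ℓ-1}`.  The first argument is the
superscript `ℓ`, the second the subscript `k`; the (unused) value at `ℓ = 0` is `⊥`.
For `S = ⊤` this is `I_k^ℓ(F)`. -/
def IklS {R : Type*} [NonUnitalRing R] [Module K R] (S : Submodule K R) :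
    ℕ → ℕ → Submodule K R
  | 0, _ => ⊥
  | 1, k => cSp K S k
  | (ℓ+2), k => ∑ i ∈ Finset.range (k+1), pSpan K (cSp K S i) (IklS S (ℓ+1) (k-i))

/-- `I_k^{≤ℓ}(F) = Σ_{1 ≤ ℓ' ≤ ℓ} I_k^{ℓ'}(F)`. -/
def Ikle {R : Type*} [NonUnitalRing R] [Module K R] (ℓ k : ℕ) : Submodule K R :=
  ∑ ℓ' ∈ Finset.Icc 1 ℓ, IklS K (⊤ : Submodule K R) ℓ' k

/-- `I_k(F) = Σ_{ℓ ≥ 1} I_k^ℓ(F)`. -/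
def Ik (R : Type*) [NonUnitalRing R] [Module K R] (k : ℕ) : Submodule K R :=
  ⨆ ℓ : ℕ, IklS K (⊤ : Submodule K R) (ℓ + 1) k

/-- `g^n`: the span of all products of `n` elements of `g` (set to `⊥` for `n = 0`). -/
def gPow {R : Type*} [NonUnitalRing R] [Module K R] (g : Submodule K R) : ℕ → Submodule K R
  | 0 => ⊥
  | 1 => g
  | (n+2) => pSpan K g (gPow g (n+1))

/-- The Lie subalgebra (under the commutator bracket) generated by a subspace `S`:
the smallest subspace containing `S` and closed under `(x, y) ↦ x * y - y * x`. -/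
def lieGen {R : Type*} [NonUnitalRing R] [Module K R] (S : Submodule K R) : Submodule K R :=
  sInf {T | S ≤ T ∧ ∀ x ∈ T, ∀ y ∈ T, x * y - y * x ∈ T}

/-- The subspace `S ⊗ T` of `F ⊗[K] A`: the span of all pure tensors `f ⊗ a`
with `f ∈ S`, `a ∈ T`. -/
def tSpan {F A : Type*} [AddCommGroup F] [Module K F] [AddCommGroup A] [Module K A]
    (S : Submodule K F) (T : Submodule K A) : Submodule K (F ⊗[K] A) :=
  Submodule.span K {z | ∃ f ∈ S, ∃ a ∈ T, z = f ⊗ₜ[K] a}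

/-- The current Lie algebra `(g, A)(F)`: the Lie subalgebra of `F ⊗ A` (with the
commutator bracket) generated by `F ⊗ g`. -/
def currentLie {F A : Type*} [NonUnitalRing F] [Module K F] [SMulCommClass K F F]
    [IsScalarTower K F F] [Ring A] [Algebra K A] (g : Submodule K A) :
    Submodule K (F ⊗[K] A) :=
  lieGen K (tSpan K (⊤ : Submodule K F) g)

/-!
Write `W = [g, g^k]·g + (g^k ∩ g^(k+1))`, and use subscripts for weights under `ad h₀`. Two
remarks show that `W` contains a lot: `[x, u] ∈ W` for `x ∈ g` and `u ∈ g^k`, so a factor may be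
rotated from one end of a product to the other modulo `W`; and `u = c⁻¹ [h₀, u]` for `u` of weight
`c ≠ 0`, so `g · (g^k)_c ⊆ W`.

Let `k = m + 1`. As `g^(m+2)` is the sum of the spaces `g · (g^m)_b · g_d`, only those with
`b + d = 0` remain. Strong gradedness gives `g = ∑_{c ≠ 0} [g, g_c]`, and the identity
`[p, q] r z = p ([q, r] z) - [q, p r] z` with `q ∈ g_c` moves `[p, q] r z` into `W`, because
`[q, r] z` has the nonzero weight `c + b + d = c`.
-/

section Perfect

attribute [local instance] LieRing.ofAssociativeRing

variable {K} {A : Type*} [Ring A] [Algebra K A]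

theorem pSpan_eq_mul (S T : Submodule K A) : pSpan K S T = S * T := by
  apply le_antisymm
  · refine span_le.2 ?_
    rintro _ ⟨a, ha, b, hb, rfl⟩
    exact mul_mem_mul ha hb
  · exact Submodule.mul_le.2 fun a ha b hb => subset_span ⟨a, ha, b, hb, rfl⟩

theorem gPow_succ_eq_pow (g : Submodule K A) (n : ℕ) : gPow K g (n + 1) = g ^ (n + 1) := by
  induction n with
  | zero => rw [gPow, zero_add, pow_one]
  | succ n ih => rw [gPow, ih, pSpan_eq_mul, pow_succ' g (n + 1)]

theorem commutator_mem_bSpan {S T : Submodule K A} {a b : A} (ha : a ∈ S) (hb : b ∈ T) :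
    a * b - b * a ∈ bSpan K S T :=
  subset_span ⟨a, ha, b, hb, rfl⟩

theorem bSpan_le {S T U : Submodule K A} :
    bSpan K S T ≤ U ↔ ∀ a ∈ S, ∀ b ∈ T, a * b - b * a ∈ U := by
  refine ⟨fun h a ha b hb => h (commutator_mem_bSpan ha hb), fun h => span_le.2 ?_⟩
  rintro _ ⟨a, ha, b, hb, rfl⟩
  exact h a ha b hb

theorem bSpan_mono {S S' T T' : Submodule K A} (hS : S ≤ S') (hT : T ≤ T') :
    bSpan K S T ≤ bSpan K S' T' :=
  bSpan_le.2 fun _ ha _ hb => commutator_mem_bSpan (hS ha) (hT hb)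

theorem bSpan_mul_right_le (S T U : Submodule K A) :
    bSpan K S (T * U) ≤ bSpan K S T * U ⊔ T * bSpan K S U := by
  refine bSpan_le.2 fun a ha v hv => ?_
  suffices T * U ≤ (bSpan K S T * U ⊔ T * bSpan K S U).comap (LieAlgebra.ad K A a) from this hv
  refine Submodule.mul_le.2 fun t ht u hu => ?_
  have leibniz : a * (t * u) - t * u * a = (a * t - t * a) * u + t * (a * u - u * a) := by
    noncomm_ring
  rw [mem_comap, LieAlgebra.ad_apply, Ring.lie_def, leibniz]
  exact add_mem_sup (mul_mem_mul (commutator_mem_bSpan ha ht) hu)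
    (mul_mem_mul ht (commutator_mem_bSpan ha hu))

theorem bSpan_mul_le (S T P : Submodule K A) :
    bSpan K S T * P ≤ S * bSpan K T P ⊔ bSpan K T (S * P) := by
  refine Submodule.mul_le.2 fun y hy p hp => ?_
  suffices bSpan K S T ≤
      (S * bSpan K T P ⊔ bSpan K T (S * P)).comap (LinearMap.mulRight K p) from this hy
  refine bSpan_le.2 fun s hs t ht => ?_
  have regroup : (s * t - t * s) * p = s * (t * p - p * t) - (t * (s * p) - s * p * t) := by
    noncomm_ring
  rw [mem_comap, LinearMap.mulRight_apply, regroup]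
  exact sub_mem (mem_sup_left (mul_mem_mul hs (commutator_mem_bSpan ht hp)))
    (mem_sup_right (commutator_mem_bSpan ht (mul_mem_mul hs hp)))

theorem bSpan_pow_le {S g : Submodule K A} (hSg : bSpan K S g ≤ g) (n : ℕ) :
    bSpan K S (g ^ n) ≤ g ^ n := by
  induction n with
  | zero =>
    refine bSpan_le.2 fun a _ b hb => ?_
    obtain ⟨r, rfl⟩ := Submodule.mem_one.1 (pow_zero g ▸ hb)
    rw [Algebra.commutes, sub_self]
    exact zero_mem _
  | succ n ih =>
    calc bSpan K S (g ^ (n + 1)) ≤ bSpan K S (g ^ n) * g ⊔ g ^ n * bSpan K S g :=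
          pow_succ g n ▸ bSpan_mul_right_le S (g ^ n) g
      _ ≤ g ^ n * g := sup_le (mul_le_mul_left ih _) (mul_le_mul_right hSg _)
      _ = g ^ (n + 1) := (pow_succ g n).symm

/-- The weight space `S_c` of a subspace `S` under `ad h`, consisting of the `x ∈ S` with
`[h, x] = c x`. The subspace `S` need not be stable under `ad h`. -/
def adWeightSpace (h : A) (S : Submodule K A) (c : K) : Submodule K A :=
  S ⊓ Module.End.eigenspace (LieAlgebra.ad K A h) c

theorem mem_adWeightSpace {h x : A} {S : Submodule K A} {c : K} :
    x ∈ adWeightSpace h S c ↔ x ∈ S ∧ h * x - x * h = c • x := by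
  rw [adWeightSpace, mem_inf, Module.End.mem_eigenspace_iff, LieAlgebra.ad_apply, Ring.lie_def]

theorem adWeightSpace_le (h : A) (S : Submodule K A) (c : K) : adWeightSpace h S c ≤ S :=
  inf_le_left

theorem adWeightSpace_mono (h : A) {S T : Submodule K A} (hST : S ≤ T) (c : K) :
    adWeightSpace h S c ≤ adWeightSpace h T c :=
  inf_le_inf_right _ hST

theorem commutator_mul_eq_add_smul {h x y : A} {c d : K} (hx : h * x - x * h = c • x)
    (hy : h * y - y * h = d • y) : h * (x * y) - x * y * h = (c + d) • (x * y) := by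
  calc h * (x * y) - x * y * h = (h * x - x * h) * y + x * (h * y - y * h) := by noncomm_ring
    _ = (c + d) • (x * y) := by rw [hx, hy, add_smul, smul_mul_assoc, mul_smul_comm]

theorem adWeightSpace_mul_le (h : A) (S T : Submodule K A) (c d : K) :
    adWeightSpace h S c * adWeightSpace h T d ≤ adWeightSpace h (S * T) (c + d) := by
  refine Submodule.mul_le.2 fun x hx y hy => ?_
  rw [mem_adWeightSpace] at hx hy ⊢
  exact ⟨mul_mem_mul hx.1 hy.1, commutator_mul_eq_add_smul hx.2 hy.2⟩

theorem bSpan_adWeightSpace_le (h : A) (S T : Submodule K A) (c d : K) :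
    bSpan K (adWeightSpace h S c) (adWeightSpace h T d) ≤
      adWeightSpace h (bSpan K S T) (c + d) := by
  refine bSpan_le.2 fun x hx y hy => ?_
  rw [mem_adWeightSpace] at hx hy ⊢
  refine ⟨commutator_mem_bSpan hx.1 hy.1, ?_⟩
  have hxy := commutator_mul_eq_add_smul hx.2 hy.2
  have hyx := commutator_mul_eq_add_smul hy.2 hx.2
  rw [add_comm d c] at hyx
  rw [smul_sub, ← hxy, ← hyx]
  noncomm_ring

theorem adWeightSpace_le_bSpan {h : A} {T : Submodule K A} (hh : h ∈ T) (S : Submodule K A)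
    {c : K} (hc : c ≠ 0) : adWeightSpace h S c ≤ bSpan K T (adWeightSpace h S c) := by
  intro x hx
  have hcx : c • x ∈ bSpan K T (adWeightSpace h S c) :=
    (mem_adWeightSpace.1 hx).2 ▸ commutator_mem_bSpan hh hx
  exact (smul_mem_iff _ hc).1 hcx

theorem pow_le_iSup_adWeightSpace {h : A} {g : Submodule K A}
    (hdiag : g ≤ ⨆ c, adWeightSpace h g c) (n : ℕ) : g ^ n ≤ ⨆ c, adWeightSpace h (g ^ n) c := by
  induction n with
  | zero =>
    refine le_iSup_of_le 0 fun x hx => mem_adWeightSpace.2 ⟨hx, ?_⟩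
    obtain ⟨r, rfl⟩ := Submodule.mem_one.1 (pow_zero g ▸ hx)
    rw [Algebra.commutes, sub_self, zero_smul]
  | succ n ih =>
    rw [pow_succ]
    refine (mul_le_mul' ih hdiag).trans ?_
    simp only [iSup_mul, mul_iSup]
    exact iSup₂_le fun d c => le_iSup_of_le (c + d) (adWeightSpace_mul_le h _ _ c d)

theorem le_iSup_bSpan_adWeightSpace {h : A} {g : Submodule K A} (hh : h ∈ g)
    (hdiag : g ≤ ⨆ c, adWeightSpace h g c)
    (hnull : adWeightSpace h g 0 ≤
      ⨆ c : {c : K // c ≠ 0}, bSpan K (adWeightSpace h g c) (adWeightSpace h g (-c))) :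
    g ≤ ⨆ c : {c : K // c ≠ 0}, bSpan K g (adWeightSpace h g c) := by
  refine hdiag.trans (iSup_le fun c => ?_)
  obtain rfl | hc := eq_or_ne c 0
  · refine hnull.trans (iSup_le fun c => ?_)
    exact le_iSup_of_le ⟨-c, neg_ne_zero.2 c.2⟩ (bSpan_mono (adWeightSpace_le h g c) le_rfl)
  · exact le_iSup_of_le ⟨c, hc⟩ (adWeightSpace_le_bSpan hh g hc)

/-- The subspace `[g, g^k]·g + (g^k ∩ g^(k+1))`; the pair `(g, A)` is perfect when it equals
`g^(k+1)` for all `k ≥ 2`. It is formed with Mathlib's powers of submodules, which differ from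
`gPow` at exponent `0`. -/
def perfectPart (g : Submodule K A) (k : ℕ) : Submodule K A :=
  bSpan K g (g ^ k) * g ⊔ (g ^ k ⊓ g ^ (k + 1))

variable {g : Submodule K A}

theorem perfectPart_le_pow (hg : bSpan K g g ≤ g) (k : ℕ) : perfectPart g k ≤ g ^ (k + 1) :=
  sup_le (pow_succ g k ▸ mul_le_mul_left (bSpan_pow_le hg k) g) inf_le_right

theorem commutator_mem_perfectPart (hg : bSpan K g g ≤ g) {k : ℕ} {x u : A} (hx : x ∈ g)
    (hu : u ∈ g ^ k) : x * u - u * x ∈ perfectPart g k := by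
  refine mem_sup_right ⟨bSpan_pow_le hg k (commutator_mem_bSpan hx hu), sub_mem ?_ ?_⟩
  · exact pow_succ' g k ▸ mul_mem_mul hx hu
  · exact pow_succ g k ▸ mul_mem_mul hu hx

theorem mul_adWeightSpace_le_perfectPart (hg : bSpan K g g ≤ g) {h : A} (hh : h ∈ g) (k : ℕ)
    {c : K} (hc : c ≠ 0) : g * adWeightSpace h (g ^ k) c ≤ perfectPart g k := by
  refine Submodule.mul_le.2 fun x hx u hu => ?_
  have hu_comm : u ∈ bSpan K g (g ^ k) :=
    bSpan_mono le_rfl (adWeightSpace_le h _ c) (adWeightSpace_le_bSpan hh _ hc hu)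
  have hux : u * x ∈ perfectPart g k := mem_sup_left (mul_mem_mul hu_comm hx)
  have hrotate := commutator_mem_perfectPart hg hx (adWeightSpace_le h _ c hu)
  exact (sub_mem_iff_left _ hux).1 hrotate

theorem bSpan_mul_adWeightSpace_le_perfectPart (hg : bSpan K g g ≤ g) {h : A} (hh : h ∈ g)
    (m : ℕ) {c b d : K} (hcbd : c + b + d ≠ 0) :
    bSpan K g (adWeightSpace h g c) * (adWeightSpace h (g ^ m) b * adWeightSpace h g d) ≤
      perfectPart g (m + 1) := by
  set Q := adWeightSpace h g c
  set R := adWeightSpace h (g ^ m) b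
  set Z := adWeightSpace h g d
  have hQRZ : bSpan K Q R * Z ≤ adWeightSpace h (g ^ (m + 1)) (c + b + d) := calc
    _ ≤ adWeightSpace h (g ^ m) (c + b) * Z := mul_le_mul_left
          ((bSpan_adWeightSpace_le h _ _ c b).trans (adWeightSpace_mono h (bSpan_pow_le hg m) _)) _
    _ ≤ adWeightSpace h (g ^ m * g) (c + b + d) := adWeightSpace_mul_le h _ _ _ d
    _ = _ := by rw [pow_succ]
  have hgR : g * R ≤ g ^ (m + 1) := pow_succ' g m ▸ mul_le_mul_right (adWeightSpace_le h _ b) g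
  calc bSpan K g Q * (R * Z) = bSpan K g Q * R * Z := (mul_assoc _ _ _).symm
    _ ≤ (g * bSpan K Q R ⊔ bSpan K Q (g * R)) * Z := mul_le_mul_left (bSpan_mul_le g Q R) Z
    _ = g * (bSpan K Q R * Z) ⊔ bSpan K Q (g * R) * Z := by rw [Submodule.sup_mul, mul_assoc]
    _ ≤ perfectPart g (m + 1) := sup_le
          ((mul_le_mul_right hQRZ g).trans (mul_adWeightSpace_le_perfectPart hg hh _ hcbd))
          (le_sup_of_le_left
            (mul_le_mul' (bSpan_mono (adWeightSpace_le h g c) hgR) (adWeightSpace_le h g d)))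

theorem pow_le_perfectPart (hg : bSpan K g g ≤ g) {h : A} (hh : h ∈ g)
    (hdiag : g ≤ ⨆ c, adWeightSpace h g c)
    (hnull : adWeightSpace h g 0 ≤
      ⨆ c : {c : K // c ≠ 0}, bSpan K (adWeightSpace h g c) (adWeightSpace h g (-c))) (m : ℕ) :
    g ^ (m + 2) ≤ perfectPart g (m + 1) := by
  have hsum : g ^ (m + 2) ≤ ⨆ b, ⨆ d, g * (adWeightSpace h (g ^ m) b * adWeightSpace h g d) := by
    rw [pow_succ', pow_succ]
    refine (mul_le_mul_right (mul_le_mul' (pow_le_iSup_adWeightSpace hdiag m) hdiag) g).trans ?_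
    simp only [iSup_mul, mul_iSup]
    exact iSup_comm.le
  refine hsum.trans (iSup₂_le fun b d => ?_)
  obtain hbd | hbd := eq_or_ne (b + d) 0
  · refine (mul_le_mul_left (le_iSup_bSpan_adWeightSpace hh hdiag hnull) _).trans ?_
    rw [iSup_mul]
    refine iSup_le fun c => bSpan_mul_adWeightSpace_le_perfectPart hg hh m ?_
    rw [add_assoc, hbd, add_zero]
    exact c.2
  · have hweight := adWeightSpace_mul_le h (g ^ m) g b d
    rw [← pow_succ] at hweight
    exact (mul_le_mul_right hweight g).trans (mul_adWeightSpace_le_perfectPart hg hh _ hbd)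

end Perfect

theorem statement14_general {K : Type*} [Field K] {A : Type*} [Ring A] [Algebra K A]
    (g : Submodule K A) (hg : ∀ x ∈ g, ∀ y ∈ g, x * y - y * x ∈ g)
    (h₀ : A) (hh₀ : h₀ ∈ g)
    (gc : K → Submodule K A)
    (hgc : ∀ (c : K) (x : A), x ∈ gc c ↔ x ∈ g ∧ h₀ * x - x * h₀ = c • x)
    (hdiag : (⨆ c : K, gc c) = g)
    (hnull : gc 0 = ⨆ c : {c : K // c ≠ 0}, bSpan K (gc (c : K)) (gc (-(c : K))))
    (k : ℕ) (hk : 1 ≤ k) :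
    pSpan K (bSpan K g (gPow K g k)) g ⊔ (gPow K g k ⊓ gPow K g (k + 1)) = gPow K g (k + 1) := by
  obtain rfl : gc = adWeightSpace h₀ g :=
    funext fun c => Submodule.ext fun x => (hgc c x).trans mem_adWeightSpace.symm
  obtain ⟨m, rfl⟩ := Nat.exists_eq_add_of_le' hk
  rw [gPow_succ_eq_pow, gPow_succ_eq_pow, pSpan_eq_mul]
  exact (perfectPart_le_pow (bSpan_le.2 hg) (m + 1)).antisymm
    (pow_le_perfectPart (bSpan_le.2 hg) hh₀ hdiag.ge hnull.le m)

/-- over an algebraically closed field of characteristic zero, if `g`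
is strongly graded (there is `h₀ ∈ g` with `ad h₀` diagonalizable and the nullspace
spanned by the `[g_c, g_{−c}]`, `c ≠ 0`), then the compatible pair `(g, A)` is perfect. -/
theorem statement14 {K : Type*} [Field K] [CharZero K] [IsAlgClosed K]
    {A : Type*} [Ring A] [Algebra K A]
    (g : Submodule K A) (hg : ∀ x ∈ g, ∀ y ∈ g, x * y - y * x ∈ g)
    (h₀ : A) (hh₀ : h₀ ∈ g)
    (gc : K → Submodule K A)
    (hgc : ∀ (c : K) (x : A), x ∈ gc c ↔ x ∈ g ∧ h₀ * x - x * h₀ = c • x)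
    (hdiag : (⨆ c : K, gc c) = g)
    (hnull : gc 0 = ⨆ c : {c : K // c ≠ 0}, bSpan K (gc (c : K)) (gc (-(c : K)))) :
    ∀ k : ℕ, 2 ≤ k →
      pSpan K (bSpan K g (gPow K g k)) g ⊔ (gPow K g k ⊓ gPow K g (k + 1)) =
        gPow K g (k + 1) := by
  intro k hk
  exact statement14_general g hg h₀ hh₀ gc hgc hdiag hnull k (one_le_two.trans hk)
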